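/- (Derivative of the quaternionic cosine, Eq. (42)) For every p ∈ ℍ, the real-variable function t ↦ ∑_{l=0}^∞ ((-1)^l/(2l)!) • (p + t•1)^{2l} has derivative at t = 0 equal to -∑_{l=0}^∞ ((-1)^l/(2l+1)!) • p^{2l+1}; that is, (cos p)' = -sin p in the sense of the full quaternionic derivative taken along the real direction. -/

import Mathlib

/-!
The cosine series is differentiated term by term. Since `1` is central, the shift `p + t • 1`
commutes with its derivative, so its powers obey the commutative power rule. For `|t| < 1` the
`l`-th differentiated term is bounded by `2l / (2l)! * (‖p‖ + 1) ^ (2l - 1)`, for `l ≥ 1` an odd-indexed term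
of the exponential series at `‖p‖ + 1`, so `hasDerivAt_tsum_of_isPreconnected` applies. The term
`l = 0` has derivative `0`, and re-indexing by `l + 1` turns the differentiated series into `-sin p`.
-/

/-- The power rule along the real direction; it has the commutative form because `p + t • 1`
commutes with its derivative `1`. -/
theorem hasDerivAt_add_smul_one_pow (p : Quaternion ℝ) (n : ℕ) (t : ℝ) :
    HasDerivAt (fun t : ℝ => (p + t • (1 : Quaternion ℝ)) ^ n)
      ((n : ℝ) • (p + t • (1 : Quaternion ℝ)) ^ (n - 1)) t := by
  have h1 : HasDerivAt (fun t : ℝ => p + t • (1 : Quaternion ℝ)) 1 t := by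
    simpa using ((hasDerivAt_id t).smul_const (1 : Quaternion ℝ)).const_add p
  induction n with
  | zero => simpa using hasDerivAt_const t (1 : Quaternion ℝ)
  | succ k ih =>
    have h2 := ih.mul h1
    simp only [pow_succ]
    refine h2.congr_deriv ?_
    rcases k with _ | k
    · simp
    · simp only [Nat.add_sub_cancel, smul_mul_assoc, ← pow_succ, mul_one]
      push_cast
      module

theorem norm_neg_one_pow_div (n m : ℕ) :
    ‖(-1 : ℝ) ^ n / (m.factorial : ℝ)‖ = 1 / (m.factorial : ℝ) := by
  simp

theorem two_mul_succ_div_factorial (l : ℕ) :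
    1 / ((2 * (l + 1)).factorial : ℝ) * ((2 * (l + 1) : ℕ) : ℝ)
      = 1 / ((2 * l + 1).factorial : ℝ) := by
  rw [show 2 * (l + 1) = (2 * l + 1) + 1 by ring, Nat.factorial_succ, Nat.cast_mul]
  have h1 : ((2 * l + 1).factorial : ℝ) ≠ 0 := by positivity
  have h2 : ((2 * l + 1 + 1 : ℕ) : ℝ) ≠ 0 := by positivity
  field_simp

theorem summable_cos_deriv_bound (R : ℝ) :
    Summable fun l : ℕ =>
      1 / ((2 * l).factorial : ℝ) * ((2 * l : ℕ) : ℝ) * R ^ (2 * l - 1) := by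
  rw [← summable_nat_add_iff 1]
  have h := (Real.summable_pow_div_factorial R).comp_injective
    (i := fun l : ℕ => 2 * l + 1) (fun a b h => by simpa using h)
  refine h.congr fun l => ?_
  rw [two_mul_succ_div_factorial, show 2 * (l + 1) - 1 = 2 * l + 1 by lia]
  simp only [Function.comp_apply]
  ring

/-- (Derivative of the quaternionic cosine, Eq. (42)) For every quaternion `p`, the
real-variable function `t ↦ cos (p + t • 1)` (given by the quaternionic cosine series) has
derivative at `t = 0` equal to `-sin p`; that is, `(cos p)' = -sin p` in the sense of the
full quaternionic derivative taken along the real direction. -/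
theorem quaternion_cos_deriv (p : Quaternion ℝ) :
    HasDerivAt
      (fun t : ℝ => ∑' l : ℕ,
        ((-1 : ℝ) ^ l / ((2 * l).factorial : ℝ)) • (p + t • (1 : Quaternion ℝ)) ^ (2 * l))
      (-∑' l : ℕ, ((-1 : ℝ) ^ l / ((2 * l + 1).factorial : ℝ)) • p ^ (2 * l + 1)) 0 := by
  have hu := summable_cos_deriv_bound (‖p‖ + 1)
  have hbound : ∀ (l : ℕ) (t : ℝ), t ∈ Metric.ball (0 : ℝ) 1 →
      ‖((-1 : ℝ) ^ l / ((2 * l).factorial : ℝ)) •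
        (((2 * l : ℕ) : ℝ) • (p + t • (1 : Quaternion ℝ)) ^ (2 * l - 1))‖ ≤
      1 / ((2 * l).factorial : ℝ) * ((2 * l : ℕ) : ℝ) * (‖p‖ + 1) ^ (2 * l - 1) := by
    intro l t ht
    have ht' : |t| < 1 := by simpa using ht
    have hq : ‖p + t • (1 : Quaternion ℝ)‖ ≤ ‖p‖ + 1 := by
      refine (norm_add_le _ _).trans ?_
      rw [norm_smul, norm_one, mul_one, Real.norm_eq_abs]
      linarith
    rw [norm_smul, norm_smul, norm_pow, norm_neg_one_pow_div, Real.norm_natCast, ← mul_assoc]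
    gcongr
  have h0 : (0 : ℝ) ∈ Metric.ball (0 : ℝ) 1 := by simp
  have hsum : Summable fun l : ℕ =>
      ((-1 : ℝ) ^ l / ((2 * l).factorial : ℝ)) •
        (p + (0 : ℝ) • (1 : Quaternion ℝ)) ^ (2 * l) := by
    have h := (Real.summable_pow_div_factorial ‖p‖).comp_injective
      (i := fun l : ℕ => 2 * l) (fun a b h => by simpa using h)
    refine .of_norm_bounded h fun l => ?_
    rw [norm_smul, norm_neg_one_pow_div, zero_smul, add_zero, norm_pow]
    exact le_of_eq (by simp only [Function.comp_apply]; ring)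
  have key := hasDerivAt_tsum_of_isPreconnected hu Metric.isOpen_ball
    (convex_ball (0 : ℝ) 1).isPreconnected
    (fun l t _ => (hasDerivAt_add_smul_one_pow p (2 * l) t).const_smul
      ((-1 : ℝ) ^ l / ((2 * l).factorial : ℝ)))
    hbound h0 hsum h0
  refine key.congr_deriv ?_
  rw [(Summable.of_norm_bounded hu fun l => hbound l 0 h0).tsum_eq_zero_add, ← tsum_neg]
  simp only [Nat.mul_zero, Nat.cast_zero, zero_smul, smul_zero, zero_add, add_zero]
  refine tsum_congr fun l => ?_
  rw [show 2 * (l + 1) - 1 = 2 * l + 1 by lia, smul_smul, ← neg_smul]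
  congr 1
  have h := two_mul_succ_div_factorial l
  calc _ = (-1 : ℝ) ^ (l + 1) *
        (1 / ((2 * (l + 1)).factorial : ℝ) * ((2 * (l + 1) : ℕ) : ℝ)) := by ring
    _ = _ := by rw [h]; ring
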